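/- Let n = 2m + 1 be odd and let τ_{2m+1} : ℂCl(2m+1) → End_ℂ(⋀W_m) be the spinor representation given by τ_{2m+1}(u + v̄ + λ e_{2m+1}) x = √2 ε(u) x − √2 ι(v̄) x + i λ γ(x). Regard Spin(2m) as a subgroup of the unit group of ℂCl(2m+1) via ℝ^{2m} ⊂ ℝ^{2m+1} ⊂ ℂ^{2m+1} (spanning e₁,…,e_{2m}). Then the subspaces 𝕊^±_{2m} = ⋀^{±}W_m are Spin(2m)-invariant, each is an irreducible Spin(2m)-representation, the two are non-equivalent, and the only Spin(2m)-invariant subspaces of ⋀W_m are 0, 𝕊^+_{2m}, 𝕊^−_{2m} and ⋀W_m; i.e. the restriction of τ_{2m+1} to Spin(2m) decomposes with multiplicity one as σ^+_{2m} ⊕ σ^−_{2m}. -/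

import Mathlib

set_option synthInstance.maxHeartbeats 1000000
set_option maxHeartbeats 1000000

noncomputable section

open Complex

/-- The quadratic form `Q(x) = -(x₁² + ⋯ + x_n²)` on `ℂⁿ`. -/
def Qc (n : ℕ) : QuadraticForm ℂ (Fin n → ℂ) :=
  QuadraticMap.weightedSumSquares ℂ (fun _ : Fin n => (-1 : ℂ))

/-- The isotropic vector `f_j = (e_{2j-1} + i e_{2j})/√2` (0-indexed: coords `2j`, `2j+1`). -/
def fvec (n j : ℕ) : Fin n → ℂ := fun i =>
  if (i : ℕ) = 2 * j then ((Real.sqrt 2 : ℂ))⁻¹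
  else if (i : ℕ) = 2 * j + 1 then Complex.I * ((Real.sqrt 2 : ℂ))⁻¹
  else 0

/-- The isotropic vector `f̄_j = -(e_{2j-1} - i e_{2j})/√2`. -/
def fbarvec (n j : ℕ) : Fin n → ℂ := fun i =>
  if (i : ℕ) = 2 * j then -((Real.sqrt 2 : ℂ))⁻¹
  else if (i : ℕ) = 2 * j + 1 then Complex.I * ((Real.sqrt 2 : ℂ))⁻¹
  else 0

/-- The standard basis vector `e` with a `1` in (0-indexed) coordinate `j`. -/
def evec (n j : ℕ) : Fin n → ℂ := fun i => if (i : ℕ) = j then 1 else 0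

/-- The maximal isotropic subspace `W = span(f₁, …, f_m)` of `ℂⁿ`. -/
def Wsub (n m : ℕ) : Submodule ℂ (Fin n → ℂ) :=
  Submodule.span ℂ (Set.range fun j : Fin m => fvec n j)

/-- `W̄ = span(f̄₁, …, f̄_m)`. -/
def Wbarsub (n m : ℕ) : Submodule ℂ (Fin n → ℂ) :=
  Submodule.span ℂ (Set.range fun j : Fin m => fbarvec n j)

/-- The Dirac spinor space `𝕊 = ⋀ W`. -/
abbrev Spinor (n m : ℕ) := ExteriorAlgebra ℂ (Wsub n m)

/-- The bilinear extension `⟨v, ·⟩ = Σ_i v_i (·)_i` of the standard inner product,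
as a linear functional. -/
def pairingLin (n : ℕ) (v : Fin n → ℂ) : (Fin n → ℂ) →ₗ[ℂ] ℂ :=
  ∑ i, v i • (LinearMap.proj i : (Fin n → ℂ) →ₗ[ℂ] ℂ)

/-- Exterior multiplication `ε(u)` by `u ∈ W` on `⋀ W`. -/
def extMul (n m : ℕ) (u : Wsub n m) : Module.End ℂ (Spinor n m) :=
  LinearMap.mulLeft ℂ (ExteriorAlgebra.ι ℂ u)

/-- Interior multiplication (contraction) `ι(v̄)` on `⋀ W` by `v̄ ∈ ℂⁿ`, with respect to the
pairing `⟨v̄, u⟩`; it is the unique degree `-1` antiderivation with `ι(v̄) u = ⟨v̄, u⟩` on `W`. -/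
def intMul (n m : ℕ) (v : Fin n → ℂ) : Module.End ℂ (Spinor n m) :=
  CliffordAlgebra.contractLeft (Q := (0 : QuadraticForm ℂ (Wsub n m)))
    ((pairingLin n v).comp (Wsub n m).subtype)

/-- The parity operator `γ`, acting by `(-1)^k` on `⋀^k W`. -/
def parity (n m : ℕ) : Module.End ℂ (Spinor n m) :=
  (CliffordAlgebra.involute (Q := (0 : QuadraticForm ℂ (Wsub n m)))).toLinearMap

/-- `γ` as a linear equivalence (it is an involution). -/
def parityEquiv (n m : ℕ) : Spinor n m ≃ₗ[ℂ] Spinor n m :=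
  LinearEquiv.ofInvolutive (parity n m) (fun x => CliffordAlgebra.involute_involute x)

/-- The even part `𝕊⁺ = ⋀^{even} W`. -/
def SpinorEven (n m : ℕ) : Submodule ℂ (Spinor n m) :=
  CliffordAlgebra.evenOdd (0 : QuadraticForm ℂ (Wsub n m)) 0

/-- The odd part `𝕊⁻ = ⋀^{odd} W`. -/
def SpinorOdd (n m : ℕ) : Submodule ℂ (Spinor n m) :=
  CliffordAlgebra.evenOdd (0 : QuadraticForm ℂ (Wsub n m)) 1

/-- The property of being an element of the spin group `Spin(k)` inside `ℂCl(n)`: a product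
of an even number of unit vectors of `ℝ^k ⊂ ℝ^n ⊂ ℂ^n` (vectors with real coordinates,
supported in the first `k` coordinates, of norm one). -/
def IsSpinElt (n k : ℕ) (g : CliffordAlgebra (Qc n)) : Prop :=
  ∃ (l : ℕ) (xs : Fin (2 * l) → (Fin n → ℂ)),
    (∀ i : Fin (2 * l),
        (∀ j : Fin n, (xs i j).im = 0) ∧
        (∀ j : Fin n, k ≤ (j : ℕ) → xs i j = 0) ∧
        (∑ j : Fin n, xs i j ^ 2) = 1) ∧
    g = (List.ofFn fun i : Fin (2 * l) => CliffordAlgebra.ι (Qc n) (xs i)).prod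

/-!
Write `ε` and `ι` for exterior and interior multiplication on `⋀ W`. The operator `1 + ε(w) ι(d)`
is the action on `⋀ W` of the map `x ↦ x + d(x) w` of `W`, and the homotheties of `W` are products
of such maps, with no condition on `d(w)`. Since `-1` acts on `⋀ W` as the parity and `0` as the
projection onto the scalars, a subspace stable under all `ε(w) ι(d)` is parity-stable, and a
vector killed by all `ι(d)` is a scalar. The latter makes `⋀ W` irreducible under the operators
`ε(w)` and `ι(d)`: iterated contractions lead from any nonzero vector to a scalar.

The complex span of `τ(Spin(2m))` contains all `τ(v) τ(w)` with `v, w ∈ ℂ^{2m}`. Hence invariant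
subspaces are parity-stable, i.e. sums of an even and an odd part. The operators `τ(v)` are odd
and act irreducibly on `⋀ W`, so if `U ≤ 𝕊^±` is invariant then so is `U + ∑ τ(v) U` under all
`τ(v)`, which forces `U = 0` or `U = 𝕊^±`. Finally the graph of an intertwining map `𝕊⁺ → 𝕊⁻`
is parity-stable, so the map vanishes.
-/

section LinearAlgebra

variable {R M V : Type*} [CommRing R] [AddCommGroup M] [Module R M] [AddCommGroup V] [Module R V]

theorem smul_one_mem_closure_range_transvection [Module.Free R M] [Module.Finite R M] (t : R) :
    (t • 1 : Module.End R M) ∈ Submonoid.closure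
      (Set.range fun p : Module.Dual R M × M => LinearMap.transvection p.1 p.2) := by
  classical
  let b := Module.Free.chooseBasis R M
  -- A homothety is a product of dilations along the axes of a basis.
  have dilation_mem (s : Finset (Module.Free.ChooseBasisIndex R M)) :
      ∃ f ∈ Submonoid.closure
        (Set.range fun p : Module.Dual R M × M => LinearMap.transvection p.1 p.2),
        ∀ i, f (b i) = if i ∈ s then t • b i else b i := by
    induction s using Finset.induction_on with
    | empty => exact ⟨1, one_mem _, fun i => by simp⟩
    | insert j s hj ih =>
      obtain ⟨f, hf, hfb⟩ := ih
      refine ⟨LinearMap.transvection ((t - 1) • b.coord j) (b j) * f,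
        mul_mem (Submonoid.subset_closure ⟨(_, _), rfl⟩) hf, fun i => ?_⟩
      obtain rfl | hij := eq_or_ne i j
      · simp [hfb, hj, LinearMap.transvection.apply, sub_smul]
      · by_cases hi : i ∈ s <;> simp [hfb, hi, hij, LinearMap.transvection.apply]
  obtain ⟨f, hf, hfb⟩ := dilation_mem Finset.univ
  have hf_eq : f = t • 1 := b.ext fun i => by simp [hfb]
  exact hf_eq ▸ hf

theorem eq_bot_or_eq_of_irreducible_of_mapsTo {S₀ S₁ U : Submodule R V}
    {𝒯 : Set (Module.End R V)} (hdisj : Disjoint S₀ S₁)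
    (hmaps : ∀ T ∈ 𝒯, ∀ x ∈ S₀, T x ∈ S₁)
    (hirr : ∀ U' : Submodule R V, (∀ T ∈ 𝒯, ∀ x ∈ U', T x ∈ U') → U' = ⊥ ∨ U' = ⊤)
    (hU : U ≤ S₀) (hUU : ∀ T ∈ 𝒯, ∀ T' ∈ 𝒯, ∀ x ∈ U, T (T' x) ∈ U) :
    U = ⊥ ∨ U = S₀ := by
  let U₁ := ⨆ T ∈ 𝒯, U.map T
  have hU₁ : U₁ ≤ S₁ := iSup₂_le fun T hT =>
    Submodule.map_le_iff_le_comap.2 fun x hx => hmaps T hT x (hU hx)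
  have hstable : ∀ T ∈ 𝒯, ∀ x ∈ U ⊔ U₁, T x ∈ U ⊔ U₁ := by
    intro T hT
    change U ⊔ U₁ ≤ (U ⊔ U₁).comap T
    refine sup_le ?_ (iSup₂_le fun T' hT' => ?_)
    · have hUT : U.map T ≤ U₁ := le_iSup₂_of_le (f := fun T _ => U.map T) T hT le_rfl
      exact Submodule.map_le_iff_le_comap.1 (hUT.trans le_sup_right)
    · exact Submodule.map_le_iff_le_comap.2 fun x hx =>
        Submodule.mem_sup_left (hUU T hT T' hT' x hx)
  refine (hirr (U ⊔ U₁) hstable).imp (fun h => (sup_eq_bot_iff.1 h).1) fun h => Eq.symm ?_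
  calc S₀ = (U ⊔ U₁) ⊓ S₀ := by rw [h, top_inf_eq]
    _ = U ⊔ U₁ ⊓ S₀ := (sup_inf_assoc_of_le U₁ hU)
    _ = U := by rw [(hdisj.symm.mono_left hU₁).eq_bot, sup_bot_eq]

end LinearAlgebra

section ExteriorAlgebra

variable {R M : Type*} [CommRing R] [AddCommGroup M] [Module R M]

/-- Interior multiplication by a linear form on the exterior algebra: the antiderivation of
degree `-1` extending the form. -/
def contraction : Module.Dual R M →ₗ[R] Module.End R (ExteriorAlgebra R M) :=
  CliffordAlgebra.contractLeft (Q := (0 : QuadraticForm R M))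

theorem contraction_algebraMap (d : Module.Dual R M) (r : R) :
    contraction d (algebraMap R (ExteriorAlgebra R M) r) = 0 :=
  CliffordAlgebra.contractLeft_algebraMap _ _ r

theorem contraction_ι_mul (d : Module.Dual R M) (x : M) (y : ExteriorAlgebra R M) :
    contraction d (ExteriorAlgebra.ι R x * y) =
      d x • y - ExteriorAlgebra.ι R x * contraction d y :=
  CliffordAlgebra.contractLeft_ι_mul _ x y

theorem contraction_contraction_self (d : Module.Dual R M) (x : ExteriorAlgebra R M) :
    contraction d (contraction d x) = 0 :=
  CliffordAlgebra.contractLeft_contractLeft _ x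

theorem contraction_comm (d d' : Module.Dual R M) (x : ExteriorAlgebra R M) :
    contraction d (contraction d' x) = -contraction d' (contraction d x) :=
  CliffordAlgebra.contractLeft_comm _ _ x

/-- The functorial action of the multiplicative monoid of endomorphisms of `M` on `⋀ M`. -/
def exteriorMapHom : Module.End R M →* Module.End R (ExteriorAlgebra R M) where
  toFun f := (ExteriorAlgebra.map f).toLinearMap
  map_one' := LinearMap.ext fun x => DFunLike.congr_fun ExteriorAlgebra.map_id x
  map_mul' f g := LinearMap.ext fun x =>
    (DFunLike.congr_fun (ExteriorAlgebra.map_comp_map g f) x).symm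

theorem exteriorMapHom_transvection (d : Module.Dual R M) (x : M) :
    exteriorMapHom (LinearMap.transvection d x) =
      1 + LinearMap.mulLeft R (ExteriorAlgebra.ι R x) * contraction d := by
  refine LinearMap.ext fun y => ?_
  change ExteriorAlgebra.map (LinearMap.transvection d x) y =
    y + ExteriorAlgebra.ι R x * contraction d y
  induction y using CliffordAlgebra.left_induction with
  | algebraMap r =>
    exact (AlgHom.commutes _ r).trans (by rw [contraction_algebraMap, mul_zero, add_zero])
  | add y z hy hz => rw [map_add, hy, hz, map_add, mul_add, add_add_add_comm]
  | ι_mul y w hy =>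
    have hwx : ExteriorAlgebra.ι R w * (ExteriorAlgebra.ι R x * contraction d y) =
        -(ExteriorAlgebra.ι R x * (ExteriorAlgebra.ι R w * contraction d y)) := by
      rw [← mul_assoc, ← mul_assoc, ← neg_mul,
        eq_neg_of_add_eq_zero_left (ExteriorAlgebra.ι_add_mul_swap w x)]
    calc ExteriorAlgebra.map (LinearMap.transvection d x) (ExteriorAlgebra.ι R w * y)
      _ = (ExteriorAlgebra.ι R w + d w • ExteriorAlgebra.ι R x) *
          (y + ExteriorAlgebra.ι R x * contraction d y) := by
        rw [map_mul, hy, ExteriorAlgebra.map_apply_ι, LinearMap.transvection.apply, map_add,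
          map_smul]
      _ = ExteriorAlgebra.ι R w * y + ExteriorAlgebra.ι R x *
          (d w • y - ExteriorAlgebra.ι R w * contraction d y) := by
        simp only [add_mul, mul_add, smul_mul_assoc, mul_sub, mul_smul_comm, hwx]
        rw [← mul_assoc (ExteriorAlgebra.ι R x) (ExteriorAlgebra.ι R x),
          ExteriorAlgebra.ι_sq_zero, zero_mul, smul_zero]
        abel
      _ = _ := by rw [← contraction_ι_mul]

theorem exteriorMapHom_smul_one_mem_closure [Module.Free R M] [Module.Finite R M] (t : R) :
    exteriorMapHom (t • 1 : Module.End R M) ∈ Submonoid.closure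
      (Set.range fun p : Module.Dual R M × M =>
        1 + LinearMap.mulLeft R (ExteriorAlgebra.ι R p.2) * contraction p.1) := by
  have hmem := Submonoid.mem_map_of_mem (exteriorMapHom (R := R) (M := M))
    (smul_one_mem_closure_range_transvection t)
  rw [MonoidHom.map_mclosure, ← Set.range_comp] at hmem
  simpa only [Function.comp_def, exteriorMapHom_transvection] using hmem

theorem exteriorMapHom_zero_apply (x : ExteriorAlgebra R M) :
    exteriorMapHom (0 : Module.End R M) x =
      algebraMap R (ExteriorAlgebra R M) (ExteriorAlgebra.algebraMapInv x) := by
  have h : ExteriorAlgebra.map (0 : Module.End R M) =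
      (Algebra.ofId R (ExteriorAlgebra R M)).comp ExteriorAlgebra.algebraMapInv :=
    ExteriorAlgebra.hom_ext (LinearMap.ext fun v => by
      simp [ExteriorAlgebra.algebraMapInv])
  exact DFunLike.congr_fun h x

theorem exteriorMapHom_neg_one_apply (x : ExteriorAlgebra R M) :
    exteriorMapHom (-1 : Module.End R M) x = CliffordAlgebra.involute x := by
  have h : ExteriorAlgebra.map (-1 : Module.End R M) = CliffordAlgebra.involute :=
    ExteriorAlgebra.hom_ext (LinearMap.ext fun v => by
      change ExteriorAlgebra.map _ (ExteriorAlgebra.ι R v) =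
        CliffordAlgebra.involute (CliffordAlgebra.ι 0 v)
      rw [ExteriorAlgebra.map_apply_ι, CliffordAlgebra.involute_ι, LinearMap.neg_apply, map_neg]
      rfl)
  exact DFunLike.congr_fun h x

theorem exists_eq_algebraMap_of_forall_contraction_eq_zero [Module.Free R M] [Module.Finite R M]
    {x : ExteriorAlgebra R M} (hx : ∀ d : Module.Dual R M, contraction d x = 0) :
    ∃ r, x = algebraMap R (ExteriorAlgebra R M) r := by
  have hfix : ∀ f ∈ Submonoid.closure (Set.range fun p : Module.Dual R M × M =>
      1 + LinearMap.mulLeft R (ExteriorAlgebra.ι R p.2) * contraction p.1), f x = x := by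
    intro f hf
    induction hf using Submonoid.closure_induction with
    | mem f hf =>
      obtain ⟨⟨d, v⟩, rfl⟩ := hf
      change x + ExteriorAlgebra.ι R v * contraction d x = x
      rw [hx, mul_zero, add_zero]
    | one => rfl
    | mul _ _ _ _ hf hg => rw [Module.End.mul_apply, hg, hf]
  have hzero := hfix _ (exteriorMapHom_smul_one_mem_closure (0 : R))
  rw [zero_smul, exteriorMapHom_zero_apply] at hzero
  exact ⟨_, hzero.symm⟩

theorem involute_mem_of_forall_ι_mul_contraction_mem [Module.Free R M] [Module.Finite R M]
    {U : Submodule R (ExteriorAlgebra R M)}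
    (hU : ∀ (d : Module.Dual R M) (v : M), ∀ x ∈ U, ExteriorAlgebra.ι R v * contraction d x ∈ U) :
    ∀ x ∈ U, CliffordAlgebra.involute x ∈ U := by
  have hstable : ∀ f ∈ Submonoid.closure (Set.range fun p : Module.Dual R M × M =>
      1 + LinearMap.mulLeft R (ExteriorAlgebra.ι R p.2) * contraction p.1), ∀ x ∈ U, f x ∈ U := by
    intro f hf
    induction hf using Submonoid.closure_induction with
    | mem _ hf =>
      obtain ⟨⟨d, v⟩, rfl⟩ := hf
      exact fun x hx => add_mem hx (hU d v x hx)
    | one => exact fun x hx => hx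
    | mul _ _ _ _ hf hg => exact fun x hx => hf _ (hg x hx)
  intro x hx
  rw [← exteriorMapHom_neg_one_apply, ← neg_one_smul R (1 : Module.End R M)]
  exact hstable _ (exteriorMapHom_smul_one_mem_closure (-1)) x hx

theorem exists_mem_ne_zero_forall_contraction_eq_zero [Module.Finite R (Module.Dual R M)]
    {U : Submodule R (ExteriorAlgebra R M)}
    (hU : ∀ d : Module.Dual R M, ∀ x ∈ U, contraction d x ∈ U) (hne : U ≠ ⊥) :
    ∃ x ∈ U, x ≠ 0 ∧ ∀ d : Module.Dual R M, contraction d x = 0 := by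
  classical
  have hfinset (s : Finset (Module.Dual R M)) :
      ∃ x ∈ U, x ≠ 0 ∧ ∀ d ∈ s, contraction d x = 0 := by
    induction s using Finset.induction_on with
    | empty => simpa using (Submodule.ne_bot_iff U).1 hne
    | insert d s _ ih =>
      obtain ⟨x, hxU, hx0, hx⟩ := ih
      by_cases hdx : contraction d x = 0
      · exact ⟨x, hxU, hx0, Finset.forall_mem_insert _ _ _ |>.2 ⟨hdx, hx⟩⟩
      · refine ⟨contraction d x, hU d x hxU, hdx, Finset.forall_mem_insert _ _ _ |>.2
          ⟨contraction_contraction_self d x, fun d' hd' => ?_⟩⟩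
        rw [contraction_comm, hx d' hd', map_zero, neg_zero]
  obtain ⟨s, hs⟩ := (Module.Finite.fg_top : (⊤ : Submodule R (Module.Dual R M)).FG)
  obtain ⟨x, hxU, hx0, hx⟩ := hfinset s
  have hspan : Submodule.span R (s : Set (Module.Dual R M)) ≤ LinearMap.ker (contraction.flip x) :=
    Submodule.span_le.2 hx
  exact ⟨x, hxU, hx0, fun d => hspan (hs ▸ Submodule.mem_top)⟩

theorem eq_bot_or_eq_top_of_forall_ι_mul_mem_of_forall_contraction_mem
    {K E : Type*} [Field K] [AddCommGroup E] [Module K E] [Module.Finite K E]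
    {U : Submodule K (ExteriorAlgebra K E)}
    (hmul : ∀ v : E, ∀ x ∈ U, ExteriorAlgebra.ι K v * x ∈ U)
    (hcontr : ∀ d : Module.Dual K E, ∀ x ∈ U, contraction d x ∈ U) : U = ⊥ ∨ U = ⊤ := by
  refine or_iff_not_imp_left.2 fun hne => ?_
  obtain ⟨x, hxU, hx0, hx⟩ := exists_mem_ne_zero_forall_contraction_eq_zero hcontr hne
  obtain ⟨r, rfl⟩ := exists_eq_algebraMap_of_forall_contraction_eq_zero hx
  have hr : r ≠ 0 := fun hr => hx0 (by rw [hr, map_zero])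
  have halgebraMap (s : K) : algebraMap K (ExteriorAlgebra K E) s ∈ U := by
    have := U.smul_mem (s * r⁻¹) hxU
    rwa [Algebra.smul_def, ← map_mul, inv_mul_cancel_right₀ hr] at this
  refine eq_top_iff.2 fun y _ => ?_
  induction y using CliffordAlgebra.left_induction with
  | algebraMap s => exact halgebraMap s
  | add y z hy hz => exact add_mem (hy trivial) (hz trivial)
  | ι_mul y v hy => exact hmul v y (hy trivial)

end ExteriorAlgebra

section EvenOdd

open CliffordAlgebra

variable {R M : Type*} [CommRing R] [AddCommGroup M] [Module R M]
  {Q : QuadraticForm R M}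

theorem exists_mem_evenOdd_add_eq (x : CliffordAlgebra Q) :
    ∃ a ∈ evenOdd Q 0, ∃ b ∈ evenOdd Q 1, a + b = x :=
  Submodule.mem_sup.1 ((evenOdd_isCompl Q).sup_eq_top ▸ Submodule.mem_top)

theorem disjoint_evenOdd_add_one (i : ZMod 2) : Disjoint (evenOdd Q i) (evenOdd Q (i + 1)) := by
  fin_cases i
  · exact (evenOdd_isCompl Q).disjoint
  · exact (evenOdd_isCompl Q).disjoint.symm

variable [Invertible (2 : R)]

theorem invOf_two_smul_add_involute {x y : CliffordAlgebra Q}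
    (hx : x ∈ evenOdd Q 0) (hy : y ∈ evenOdd Q 1) :
    ⅟(2 : R) • (x + y + involute (x + y)) = x := by
  rw [map_add, involute_eq_of_mem_even hx, involute_eq_of_mem_odd hy, add_add_add_comm,
    add_neg_cancel, add_zero, ← two_smul R, invOf_smul_smul]

theorem mem_evenOdd_zero_iff {x : CliffordAlgebra Q} : x ∈ evenOdd Q 0 ↔ involute x = x := by
  refine ⟨involute_eq_of_mem_even, fun hx => ?_⟩
  obtain ⟨a, ha, b, hb, rfl⟩ := exists_mem_evenOdd_add_eq x
  have hab := invOf_two_smul_add_involute ha hb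
  rw [hx, ← two_smul R, invOf_smul_smul] at hab
  rwa [hab]

theorem mem_evenOdd_one_iff {x : CliffordAlgebra Q} : x ∈ evenOdd Q 1 ↔ involute x = -x := by
  refine ⟨involute_eq_of_mem_odd, fun hx => ?_⟩
  obtain ⟨a, ha, b, hb, rfl⟩ := exists_mem_evenOdd_add_eq x
  have hab := invOf_two_smul_add_involute ha hb
  rw [hx, add_neg_cancel, smul_zero] at hab
  rwa [← hab, zero_add]

theorem apply_mem_evenOdd_add_one_of_apply_involute {T : Module.End R (CliffordAlgebra Q)}
    (hT : ∀ x, T (involute x) = -involute (T x)) {i : ZMod 2} {x : CliffordAlgebra Q}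
    (hx : x ∈ evenOdd Q i) : T x ∈ evenOdd Q (i + 1) := by
  fin_cases i
  · change T x ∈ evenOdd Q 1
    rw [mem_evenOdd_one_iff, eq_neg_iff_add_eq_zero, ← neg_eq_iff_add_eq_zero, ← hT,
      involute_eq_of_mem_even hx]
  · change T x ∈ evenOdd Q 0
    rw [mem_evenOdd_zero_iff, ← neg_inj, ← hT, involute_eq_of_mem_odd hx, map_neg]

theorem mem_and_mem_of_add_mem_of_involute_mem {U : Submodule R (CliffordAlgebra Q)}
    (hU : ∀ x ∈ U, involute x ∈ U) {x y : CliffordAlgebra Q} (hx : x ∈ evenOdd Q 0)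
    (hy : y ∈ evenOdd Q 1) (hxy : x + y ∈ U) : x ∈ U ∧ y ∈ U := by
  have hxU : x ∈ U :=
    invOf_two_smul_add_involute hx hy ▸ U.smul_mem _ (add_mem hxy (hU _ hxy))
  exact ⟨hxU, (U.add_mem_iff_right hxU).1 hxy⟩

theorem inf_evenOdd_sup_inf_evenOdd_of_involute_mem {U : Submodule R (CliffordAlgebra Q)}
    (hU : ∀ x ∈ U, involute x ∈ U) : U ⊓ evenOdd Q 0 ⊔ U ⊓ evenOdd Q 1 = U := by
  refine le_antisymm (sup_le inf_le_left inf_le_left) fun x hx => ?_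
  obtain ⟨a, ha, b, hb, rfl⟩ := exists_mem_evenOdd_add_eq x
  obtain ⟨haU, hbU⟩ := mem_and_mem_of_add_mem_of_involute_mem hU ha hb hx
  exact Submodule.add_mem_sup ⟨haU, ha⟩ ⟨hbU, hb⟩

end EvenOdd

section SpinGroup

variable {n k : ℕ}

/-- The subspace `ℂᵏ ⊆ ℂⁿ` of vectors supported in the first `k` coordinates. -/
def coordSubspace (n k : ℕ) : Submodule ℂ (Fin n → ℂ) :=
  Submodule.pi {j | k ≤ (j : ℕ)} fun _ => ⊥

theorem mem_coordSubspace {v : Fin n → ℂ} :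
    v ∈ coordSubspace n k ↔ ∀ j : Fin n, k ≤ (j : ℕ) → v j = 0 :=
  Iff.rfl

theorem evec_eq_single (i : Fin n) : evec n i = Pi.single i 1 :=
  funext fun j => by simp [evec, Pi.single_apply, Fin.ext_iff]

theorem coordSubspace_le_span :
    coordSubspace n k ≤ Submodule.span ℂ {v | ∃ i : Fin n, (i : ℕ) < k ∧ v = Pi.single i 1} := by
  intro v hv
  rw [pi_eq_sum_univ' v]
  refine Submodule.sum_mem _ fun i _ => ?_
  by_cases hi : (i : ℕ) < k
  · refine Submodule.smul_mem _ _ (Submodule.subset_span ⟨i, hi, ?_⟩)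
    exact funext fun j => by simp [Pi.single_apply, eq_comm]
  · simp [mem_coordSubspace.1 hv i (not_lt.1 hi)]

theorem isSpinElt_ι_single_mul_ι_single {i j : Fin n} (hi : (i : ℕ) < k) (hj : (j : ℕ) < k) :
    IsSpinElt n k (CliffordAlgebra.ι (Qc n) (Pi.single i 1) *
      CliffordAlgebra.ι (Qc n) (Pi.single j 1)) := by
  have hunit (i : Fin n) (hi : (i : ℕ) < k) :
      (∀ j : Fin n, ((Pi.single i 1 : Fin n → ℂ) j).im = 0) ∧
        (∀ j : Fin n, k ≤ (j : ℕ) → (Pi.single i 1 : Fin n → ℂ) j = 0) ∧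
        ∑ j : Fin n, (Pi.single i 1 : Fin n → ℂ) j ^ 2 = 1 := by
    refine ⟨fun j => ?_, fun j hj => Pi.single_eq_of_ne ?_ _, ?_⟩
    · rw [Pi.single_apply]
      split_ifs <;> simp
    · rintro rfl
      omega
    · simp [Pi.single_apply]
  refine ⟨1, ![Pi.single i 1, Pi.single j 1], fun l => ?_, by simp [List.ofFn_succ]⟩
  fin_cases l
  · exact hunit i hi
  · exact hunit j hj

theorem IsSpinElt.exists_list {g : CliffordAlgebra (Qc n)} (hg : IsSpinElt n k g) :
    ∃ L : List (Fin n → ℂ), Even L.length ∧ (∀ v ∈ L, v ∈ coordSubspace n k) ∧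
      g = (L.map (CliffordAlgebra.ι (Qc n))).prod := by
  obtain ⟨l, xs, hxs, rfl⟩ := hg
  refine ⟨List.ofFn xs, by simp, fun v hv => ?_, by rw [List.map_ofFn]; rfl⟩
  obtain ⟨i, rfl⟩ := (List.mem_ofFn' _ _).1 hv
  exact (hxs i).2.1

theorem Qc_apply (v : Fin n → ℂ) : Qc n v = -(v ⬝ᵥ v) := by
  simp [Qc, QuadraticMap.weightedSumSquares_apply, dotProduct]

theorem isOrtho_Qc_iff {v w : Fin n → ℂ} : (Qc n).IsOrtho v w ↔ v ⬝ᵥ w = 0 := by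
  simp only [QuadraticMap.isOrtho_def, Qc_apply, add_dotProduct, dotProduct_add,
    dotProduct_comm w v]
  constructor
  · intro h
    linear_combination (-1 / 2 : ℂ) * h
  · intro h
    linear_combination -2 * h

/-- Invariance of a subspace under the restriction to `Spin(k)` of a representation of
`ℂCl(n)`. -/
def IsSpinInvariant {V : Type*} [AddCommGroup V] [Module ℂ V] (n k : ℕ)
    (τ : CliffordAlgebra (Qc n) →ₐ[ℂ] Module.End ℂ V) (U : Submodule ℂ V) : Prop :=
  ∀ g, IsSpinElt n k g → ∀ x ∈ U, τ g x ∈ U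

-- The products of two real unit vectors span, over `ℂ`, all products of two vectors of `ℂᵏ`.
theorem IsSpinInvariant.ι_ι_mem {V : Type*} [AddCommGroup V] [Module ℂ V]
    {τ : CliffordAlgebra (Qc n) →ₐ[ℂ] Module.End ℂ V} {U : Submodule ℂ V}
    (hU : IsSpinInvariant n k τ U) {v w : Fin n → ℂ} (hv : v ∈ coordSubspace n k)
    (hw : w ∈ coordSubspace n k) {x : V} (hx : x ∈ U) :
    τ (CliffordAlgebra.ι (Qc n) v) (τ (CliffordAlgebra.ι (Qc n) w) x) ∈ U := by
  replace hv := coordSubspace_le_span hv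
  replace hw := coordSubspace_le_span hw
  induction hv, hw using Submodule.span_induction₂ with
  | mem_mem v w hv hw =>
    obtain ⟨i, hi, rfl⟩ := hv
    obtain ⟨j, hj, rfl⟩ := hw
    rw [← Module.End.mul_apply, ← map_mul]
    exact hU _ (isSpinElt_ι_single_mul_ι_single hi hj) x hx
  | zero_left _ _ => simp
  | zero_right _ _ => simp
  | add_left v v' w _ _ _ h h' => simpa using add_mem h h'
  | add_right v w w' _ _ _ h h' => simpa using add_mem h h'
  | smul_left c v w _ _ h => simpa using U.smul_mem c h
  | smul_right c v w _ _ h => simpa using U.smul_mem c h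

end SpinGroup

section IsotropicSubspaces

variable {n m : ℕ}

theorem pairingLin_apply (v w : Fin n → ℂ) : pairingLin n v w = v ⬝ᵥ w := by
  simp [pairingLin, dotProduct]

theorem ofReal_sqrt_two_ne_zero : (Real.sqrt 2 : ℂ) ≠ 0 :=
  Complex.ofReal_ne_zero.2 (Real.sqrt_ne_zero'.2 two_pos)

theorem ofReal_sqrt_two_sq : (Real.sqrt 2 : ℂ) ^ 2 = 2 := by
  rw [← Complex.ofReal_pow, Real.sq_sqrt zero_le_two, Complex.ofReal_ofNat]

theorem fvec_eq {j : ℕ} (hj : 2 * j + 1 < n) :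
    fvec n j = (Real.sqrt 2 : ℂ)⁻¹ • ((Pi.single ⟨2 * j, by omega⟩ 1 : Fin n → ℂ) +
      I • Pi.single ⟨2 * j + 1, hj⟩ 1) := by
  funext i
  simp only [fvec, Pi.smul_apply, Pi.add_apply, Pi.single_apply, Fin.ext_iff, smul_eq_mul]
  split_ifs <;> first | omega | simp [mul_comm]

theorem fbarvec_dotProduct_fvec {j k : ℕ} (hk : 2 * k + 1 < n) :
    fbarvec n j ⬝ᵥ fvec n k = if j = k then -1 else 0 := by
  rw [fvec_eq hk]
  simp only [dotProduct_smul, dotProduct_add, dotProduct_single, mul_one, smul_eq_mul, fbarvec]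
  split_ifs <;> first | omega | skip
  · field_simp
    linear_combination Complex.I_sq + ofReal_sqrt_two_sq
  · simp

theorem fvec_mem_coordSubspace {j : ℕ} (hj : j < m) : fvec n j ∈ coordSubspace n (2 * m) :=
  fun i (hi : 2 * m ≤ (i : ℕ)) => by
    change fvec n j i = 0
    rw [fvec, if_neg (by omega), if_neg (by omega)]

theorem fbarvec_mem_coordSubspace {j : ℕ} (hj : j < m) :
    fbarvec n j ∈ coordSubspace n (2 * m) :=
  fun i (hi : 2 * m ≤ (i : ℕ)) => by
    change fbarvec n j i = 0
    rw [fbarvec, if_neg (by omega), if_neg (by omega)]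

theorem Wsub_le_coordSubspace : Wsub n m ≤ coordSubspace n (2 * m) :=
  Submodule.span_le.2 (Set.range_subset_iff.2 fun j => fvec_mem_coordSubspace j.2)

theorem Wbarsub_le_coordSubspace : Wbarsub n m ≤ coordSubspace n (2 * m) :=
  Submodule.span_le.2 (Set.range_subset_iff.2 fun j => fbarvec_mem_coordSubspace j.2)

theorem intMul_zero : intMul n m 0 = 0 := by
  simp [intMul, pairingLin]

theorem exists_mem_Wbarsub_pairingLin_comp_subtype_eq (hmn : 2 * m ≤ n)
    (d : Module.Dual ℂ (Wsub n m)) :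
    ∃ v ∈ Wbarsub n m, pairingLin n v ∘ₗ (Wsub n m).subtype = d := by
  let f (j : Fin m) : Wsub n m := ⟨fvec n j, Submodule.subset_span ⟨j, rfl⟩⟩
  have hspan : Submodule.span ℂ (Set.range f) = ⊤ := by
    have hf : Set.range f = (Wsub n m).subtype ⁻¹' Set.range fun j : Fin m => fvec n j := by
      ext w
      simp [f, Subtype.ext_iff]
    rw [hf]
    exact Submodule.span_span_coe_preimage
  refine ⟨-∑ j, d (f j) • fbarvec n j, neg_mem (Submodule.sum_mem _ fun j _ =>
    Submodule.smul_mem _ _ (Submodule.subset_span ⟨j, rfl⟩)), ?_⟩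
  refine LinearMap.ext_on_range hspan fun k => ?_
  have hk : 2 * (k : ℕ) + 1 < n := by omega
  simp [pairingLin_apply, f, sum_dotProduct, fbarvec_dotProduct_fvec hk, Fin.val_inj]

end IsotropicSubspaces

section SpinorRepresentation

variable {m : ℕ} {τ : CliffordAlgebra (Qc (2 * m + 1)) →ₐ[ℂ] Module.End ℂ (Spinor (2 * m + 1) m)}

/-- `τ` is the spinor representation of `ℂCl(2m+1)` on `⋀ W_m`, as determined by its values on
the generators `u + v̄ + λ e_{2m+1}`. -/
def IsSpinorRep (m : ℕ)
    (τ : CliffordAlgebra (Qc (2 * m + 1)) →ₐ[ℂ] Module.End ℂ (Spinor (2 * m + 1) m)) : Prop :=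
  ∀ (u : Wsub (2 * m + 1) m) (v : Wbarsub (2 * m + 1) m) (lam : ℂ) (x : Spinor (2 * m + 1) m),
    τ (CliffordAlgebra.ι (Qc (2 * m + 1))
        ((u : Fin (2 * m + 1) → ℂ) + (v : Fin (2 * m + 1) → ℂ) +
          lam • evec (2 * m + 1) (2 * m))) x =
      (Real.sqrt 2 : ℂ) • (ExteriorAlgebra.ι ℂ u * x) -
        (Real.sqrt 2 : ℂ) • intMul (2 * m + 1) m (v : Fin (2 * m + 1) → ℂ) x +
        (Complex.I * lam) • parity (2 * m + 1) m x

namespace IsSpinorRep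

theorem apply_ι_Wsub (hτ : IsSpinorRep m τ) (u : Wsub (2 * m + 1) m)
    (x : Spinor (2 * m + 1) m) :
    τ (CliffordAlgebra.ι (Qc (2 * m + 1)) u) x =
      (Real.sqrt 2 : ℂ) • (ExteriorAlgebra.ι ℂ u * x) := by
  have h := hτ u 0 0 x
  simpa only [ZeroMemClass.coe_zero, add_zero, zero_smul, mul_zero, intMul_zero,
    LinearMap.zero_apply, smul_zero, sub_zero] using h

theorem apply_ι_Wbarsub (hτ : IsSpinorRep m τ) (v : Wbarsub (2 * m + 1) m)
    (x : Spinor (2 * m + 1) m) :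
    τ (CliffordAlgebra.ι (Qc (2 * m + 1)) v) x =
      -((Real.sqrt 2 : ℂ) • intMul (2 * m + 1) m v x) := by
  have h := hτ 0 v 0 x
  simpa only [ZeroMemClass.coe_zero, add_zero, zero_add, zero_smul, mul_zero, map_zero, zero_mul,
    smul_zero, zero_sub] using h

theorem apply_ι_evec (hτ : IsSpinorRep m τ) (x : Spinor (2 * m + 1) m) :
    τ (CliffordAlgebra.ι (Qc (2 * m + 1)) (evec (2 * m + 1) (2 * m))) x =
      I • CliffordAlgebra.involute x := by
  have h := hτ 0 0 1 x
  simpa only [ZeroMemClass.coe_zero, add_zero, zero_add, one_smul, mul_one, map_zero, zero_mul,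
    smul_zero, sub_zero, intMul_zero, LinearMap.zero_apply, parity, AlgHom.toLinearMap_apply]
    using h

theorem ι_mul_eq (hτ : IsSpinorRep m τ) (u : Wsub (2 * m + 1) m) (x : Spinor (2 * m + 1) m) :
    ExteriorAlgebra.ι ℂ u * x =
      (Real.sqrt 2 : ℂ)⁻¹ • τ (CliffordAlgebra.ι (Qc (2 * m + 1)) u) x := by
  rw [hτ.apply_ι_Wsub, inv_smul_smul₀ ofReal_sqrt_two_ne_zero]

theorem exists_contraction_eq (hτ : IsSpinorRep m τ) (d : Module.Dual ℂ (Wsub (2 * m + 1) m)) :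
    ∃ v ∈ coordSubspace (2 * m + 1) (2 * m), ∀ x, contraction d x =
      -(Real.sqrt 2 : ℂ)⁻¹ • τ (CliffordAlgebra.ι (Qc (2 * m + 1)) v) x := by
  obtain ⟨v, hv, rfl⟩ :=
    exists_mem_Wbarsub_pairingLin_comp_subtype_eq (Nat.le_succ (2 * m)) d
  refine ⟨v, Wbarsub_le_coordSubspace hv, fun x => ?_⟩
  rw [hτ.apply_ι_Wbarsub ⟨v, hv⟩ x, smul_neg, neg_smul, neg_neg,
    inv_smul_smul₀ ofReal_sqrt_two_ne_zero]
  rfl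

theorem apply_ι_involute (hτ : IsSpinorRep m τ) {v : Fin (2 * m + 1) → ℂ}
    (hv : v ∈ coordSubspace (2 * m + 1) (2 * m)) (x : Spinor (2 * m + 1) m) :
    τ (CliffordAlgebra.ι (Qc (2 * m + 1)) v) (CliffordAlgebra.involute x) =
      -CliffordAlgebra.involute (τ (CliffordAlgebra.ι (Qc (2 * m + 1)) v) x) := by
  have hortho : (Qc (2 * m + 1)).IsOrtho v (evec (2 * m + 1) (2 * m)) := by
    have hlast : evec (2 * m + 1) (2 * m) = Pi.single (Fin.last (2 * m)) 1 :=
      evec_eq_single (Fin.last (2 * m))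
    rw [isOrtho_Qc_iff, hlast, dotProduct_single_one]
    exact mem_coordSubspace.1 hv (Fin.last (2 * m)) le_rfl
  have hcomm := DFunLike.congr_fun
    (congrArg τ (CliffordAlgebra.ι_mul_ι_comm_of_isOrtho hortho)) x
  rw [map_neg, map_mul, map_mul, LinearMap.neg_apply, Module.End.mul_apply, Module.End.mul_apply,
    hτ.apply_ι_evec, hτ.apply_ι_evec, map_smul, ← smul_neg] at hcomm
  exact smul_right_injective _ Complex.I_ne_zero hcomm

theorem apply_ι_mem_evenOdd (hτ : IsSpinorRep m τ) {v : Fin (2 * m + 1) → ℂ}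
    (hv : v ∈ coordSubspace (2 * m + 1) (2 * m)) {i : ZMod 2} {x : Spinor (2 * m + 1) m}
    (hx : x ∈ CliffordAlgebra.evenOdd 0 i) :
    τ (CliffordAlgebra.ι (Qc (2 * m + 1)) v) x ∈ CliffordAlgebra.evenOdd 0 (i + 1) :=
  apply_mem_evenOdd_add_one_of_apply_involute (hτ.apply_ι_involute hv) hx

theorem apply_prod_ι_mem_evenOdd (hτ : IsSpinorRep m τ) {L : List (Fin (2 * m + 1) → ℂ)}
    (hL : ∀ v ∈ L, v ∈ coordSubspace (2 * m + 1) (2 * m)) {i : ZMod 2}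
    {x : Spinor (2 * m + 1) m} (hx : x ∈ CliffordAlgebra.evenOdd 0 i) :
    τ (L.map (CliffordAlgebra.ι (Qc (2 * m + 1)))).prod x ∈
      CliffordAlgebra.evenOdd 0 (i + L.length) := by
  induction L with
  | nil => simpa using hx
  | cons v L ih =>
    rw [List.forall_mem_cons] at hL
    rw [List.map_cons, List.prod_cons, map_mul, Module.End.mul_apply, List.length_cons,
      Nat.cast_succ, ← add_assoc]
    exact hτ.apply_ι_mem_evenOdd hL.1 (ih hL.2)

theorem isSpinInvariant_evenOdd (hτ : IsSpinorRep m τ) (i : ZMod 2) :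
    IsSpinInvariant (2 * m + 1) (2 * m) τ (CliffordAlgebra.evenOdd 0 i) := by
  intro g hg x hx
  obtain ⟨L, hlen, hL, rfl⟩ := hg.exists_list
  simpa only [(ZMod.natCast_eq_zero_iff_even).2 hlen, add_zero] using
    hτ.apply_prod_ι_mem_evenOdd hL hx

theorem eq_bot_or_eq_top_of_apply_ι_mem (hτ : IsSpinorRep m τ)
    {U : Submodule ℂ (Spinor (2 * m + 1) m)}
    (hU : ∀ v ∈ coordSubspace (2 * m + 1) (2 * m), ∀ x ∈ U,
      τ (CliffordAlgebra.ι (Qc (2 * m + 1)) v) x ∈ U) : U = ⊥ ∨ U = ⊤ := by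
  refine eq_bot_or_eq_top_of_forall_ι_mul_mem_of_forall_contraction_mem
    (fun u x hx => ?_) fun d x hx => ?_
  · rw [hτ.ι_mul_eq]
    exact U.smul_mem _ (hU u (Wsub_le_coordSubspace u.2) x hx)
  · obtain ⟨v, hv, hd⟩ := hτ.exists_contraction_eq d
    rw [hd]
    exact U.smul_mem _ (hU v hv x hx)

theorem eq_bot_or_eq_evenOdd (hτ : IsSpinorRep m τ) {i : ZMod 2}
    {U : Submodule ℂ (Spinor (2 * m + 1) m)} (hUi : U ≤ CliffordAlgebra.evenOdd 0 i)
    (hU : IsSpinInvariant (2 * m + 1) (2 * m) τ U) :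
    U = ⊥ ∨ U = CliffordAlgebra.evenOdd 0 i := by
  refine eq_bot_or_eq_of_irreducible_of_mapsTo (disjoint_evenOdd_add_one i)
    (𝒯 := (fun v => τ (CliffordAlgebra.ι _ v)) '' coordSubspace (2 * m + 1) (2 * m))
    (Set.forall_mem_image.2 fun v hv x hx => hτ.apply_ι_mem_evenOdd hv hx)
    (fun U' hU' => hτ.eq_bot_or_eq_top_of_apply_ι_mem (Set.forall_mem_image.1 hU')) hUi ?_
  exact Set.forall_mem_image.2 fun v hv => Set.forall_mem_image.2 fun w hw x hx =>
    hU.ι_ι_mem hv hw hx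

theorem involute_mem (hτ : IsSpinorRep m τ) {U : Submodule ℂ (Spinor (2 * m + 1) m)}
    (hU : IsSpinInvariant (2 * m + 1) (2 * m) τ U) :
    ∀ x ∈ U, CliffordAlgebra.involute x ∈ U := by
  refine involute_mem_of_forall_ι_mul_contraction_mem fun d u x hx => ?_
  obtain ⟨v, hv, hd⟩ := hτ.exists_contraction_eq d
  rw [hτ.ι_mul_eq, hd, map_smul]
  exact U.smul_mem _ (U.smul_mem _ (hU.ι_ι_mem (Wsub_le_coordSubspace u.2) hv hx))

theorem eq_bot_or_eq_even_or_eq_odd_or_eq_top (hτ : IsSpinorRep m τ)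
    {U : Submodule ℂ (Spinor (2 * m + 1) m)} (hU : IsSpinInvariant (2 * m + 1) (2 * m) τ U) :
    U = ⊥ ∨ U = SpinorEven (2 * m + 1) m ∨ U = SpinorOdd (2 * m + 1) m ∨ U = ⊤ := by
  have hinf (i : ZMod 2) :
      U ⊓ CliffordAlgebra.evenOdd 0 i = ⊥ ∨
        U ⊓ CliffordAlgebra.evenOdd 0 i = CliffordAlgebra.evenOdd 0 i :=
    hτ.eq_bot_or_eq_evenOdd inf_le_right fun g hg x hx =>
      ⟨hU g hg x hx.1, hτ.isSpinInvariant_evenOdd i g hg x hx.2⟩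
  rw [← inf_evenOdd_sup_inf_evenOdd_of_involute_mem (hτ.involute_mem hU)]
  rcases hinf 0 with h₀ | h₀ <;> rcases hinf 1 with h₁ | h₁ <;> rw [h₀, h₁]
  · exact .inl (sup_idem _)
  · exact .inr (.inr (.inl (bot_sup_eq _)))
  · exact .inr (.inl (sup_bot_eq _))
  · exact .inr (.inr (.inr (CliffordAlgebra.evenOdd_isCompl _).sup_eq_top))

-- The graph of an intertwining map is an invariant subspace, hence contains the even and the odd
-- part of each of its vectors.
theorem intertwining_eq_zero (hτ : IsSpinorRep m τ)
    {φ : SpinorEven (2 * m + 1) m →ₗ[ℂ] SpinorOdd (2 * m + 1) m}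
    (hφ : ∀ a, IsSpinElt (2 * m + 1) (2 * m) a → ∀ x y : SpinorEven (2 * m + 1) m,
      (y : Spinor (2 * m + 1) m) = τ a x → (φ y : Spinor (2 * m + 1) m) = τ a (φ x)) :
    φ = 0 := by
  let graph := LinearMap.range
    ((SpinorEven (2 * m + 1) m).subtype + (SpinorOdd (2 * m + 1) m).subtype ∘ₗ φ)
  have hgraph : IsSpinInvariant (2 * m + 1) (2 * m) τ graph := by
    rintro a ha _ ⟨x, rfl⟩
    let y : SpinorEven (2 * m + 1) m := ⟨τ a x, hτ.isSpinInvariant_evenOdd 0 a ha x x.2⟩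
    exact ⟨y, (congrArg (τ a x + ·) (hφ a ha x y rfl)).trans (map_add (τ a) _ _).symm⟩
  refine LinearMap.ext fun x => Subtype.ext ?_
  obtain ⟨y, hy⟩ : (φ x : Spinor (2 * m + 1) m) ∈ graph :=
    (mem_and_mem_of_add_mem_of_involute_mem (hτ.involute_mem hgraph) x.2 (φ x).2
      ⟨x, rfl⟩).2
  change (y : Spinor (2 * m + 1) m) + φ y = φ x at hy
  have hyodd : (y : Spinor (2 * m + 1) m) ∈ SpinorOdd (2 * m + 1) m := by
    rw [eq_sub_of_add_eq hy]
    exact sub_mem (φ x).2 (φ y).2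
  have hy0 : y = 0 := Submodule.coe_eq_zero.1
    (Submodule.disjoint_def.1 (CliffordAlgebra.evenOdd_isCompl _).disjoint _ y.2 hyodd)
  rw [← hy, hy0, map_zero]
  exact add_zero _

theorem not_exists_intertwining_equiv (hτ : IsSpinorRep m τ) :
    ¬ ∃ g : SpinorEven (2 * m + 1) m ≃ₗ[ℂ] SpinorOdd (2 * m + 1) m,
      ∀ a, IsSpinElt (2 * m + 1) (2 * m) a → ∀ x y : SpinorEven (2 * m + 1) m,
        (y : Spinor (2 * m + 1) m) = τ a (x : Spinor (2 * m + 1) m) →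
          (g y : Spinor (2 * m + 1) m) = τ a (g x : Spinor (2 * m + 1) m) := by
  rintro ⟨g, hg⟩
  let vacuum : SpinorEven (2 * m + 1) m :=
    ⟨1, Submodule.one_le.1 (CliffordAlgebra.one_le_evenOdd_zero _)⟩
  have hg0 : g vacuum = 0 := DFunLike.congr_fun (hτ.intertwining_eq_zero (φ := g.toLinearMap) hg) _
  exact one_ne_zero (congrArg Subtype.val (g.map_eq_zero_iff.1 hg0))

end IsSpinorRep

end SpinorRepresentation

/-- Let `n = 2m + 1` be odd and `τ : ℂCl(2m+1) → End(⋀W_m)` the spinor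
representation `τ(u + v̄ + λ e_{2m+1}) x = √2 ε(u) x − √2 ι(v̄) x + i λ γ(x)`. Regard
`Spin(2m)` inside `ℂCl(2m+1)` via `ℝ^{2m} ⊂ ℝ^{2m+1} ⊂ ℂ^{2m+1}`. Then `𝕊^± = ⋀^± W_m`
are `Spin(2m)`-invariant, each is irreducible, the two are non-equivalent, and the only
`Spin(2m)`-invariant subspaces of `⋀W_m` are `0`, `𝕊⁺`, `𝕊⁻` and `⋀W_m`; i.e. the
restriction of `τ` to `Spin(2m)` decomposes with multiplicity one as `σ⁺ ⊕ σ⁻`. -/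
theorem spin_rep_odd_restriction_spin_even (m : ℕ) (hm : 1 ≤ m)
    (τ : CliffordAlgebra (Qc (2 * m + 1)) →ₐ[ℂ] Module.End ℂ (Spinor (2 * m + 1) m))
    (hτ : ∀ (u : Wsub (2 * m + 1) m) (v : Wbarsub (2 * m + 1) m) (lam : ℂ)
        (x : Spinor (2 * m + 1) m),
        τ (CliffordAlgebra.ι (Qc (2 * m + 1))
            ((u : Fin (2 * m + 1) → ℂ) + (v : Fin (2 * m + 1) → ℂ) +
              lam • evec (2 * m + 1) (2 * m))) x =
          (Real.sqrt 2 : ℂ) • (ExteriorAlgebra.ι ℂ u * x) -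
            (Real.sqrt 2 : ℂ) • intMul (2 * m + 1) m (v : Fin (2 * m + 1) → ℂ) x +
            (Complex.I * lam) • parity (2 * m + 1) m x) :
    -- `𝕊⁺` and `𝕊⁻` are invariant under `Spin(2m)`
    (∀ g, IsSpinElt (2 * m + 1) (2 * m) g →
        ∀ x ∈ SpinorEven (2 * m + 1) m, τ g x ∈ SpinorEven (2 * m + 1) m) ∧
    (∀ g, IsSpinElt (2 * m + 1) (2 * m) g →
        ∀ x ∈ SpinorOdd (2 * m + 1) m, τ g x ∈ SpinorOdd (2 * m + 1) m) ∧
    -- each is an irreducible `Spin(2m)`-representation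
    (∀ U : Submodule ℂ (Spinor (2 * m + 1) m), U ≤ SpinorEven (2 * m + 1) m →
        (∀ g, IsSpinElt (2 * m + 1) (2 * m) g → ∀ x ∈ U, τ g x ∈ U) →
        U = ⊥ ∨ U = SpinorEven (2 * m + 1) m) ∧
    (∀ U : Submodule ℂ (Spinor (2 * m + 1) m), U ≤ SpinorOdd (2 * m + 1) m →
        (∀ g, IsSpinElt (2 * m + 1) (2 * m) g → ∀ x ∈ U, τ g x ∈ U) →
        U = ⊥ ∨ U = SpinorOdd (2 * m + 1) m) ∧
    -- the two are non-equivalent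
    (¬ ∃ g : SpinorEven (2 * m + 1) m ≃ₗ[ℂ] SpinorOdd (2 * m + 1) m,
        ∀ a, IsSpinElt (2 * m + 1) (2 * m) a →
          ∀ x y : SpinorEven (2 * m + 1) m,
            (y : Spinor (2 * m + 1) m) = τ a (x : Spinor (2 * m + 1) m) →
              (g y : Spinor (2 * m + 1) m) = τ a (g x : Spinor (2 * m + 1) m)) ∧
    -- the only `Spin(2m)`-invariant subspaces are `⊥`, `𝕊⁺`, `𝕊⁻`, `⊤`
    (∀ U : Submodule ℂ (Spinor (2 * m + 1) m),
        (∀ g, IsSpinElt (2 * m + 1) (2 * m) g → ∀ x ∈ U, τ g x ∈ U) →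
        U = ⊥ ∨ U = SpinorEven (2 * m + 1) m ∨ U = SpinorOdd (2 * m + 1) m ∨ U = ⊤) := by
  have hrep : IsSpinorRep m τ := hτ
  exact ⟨hrep.isSpinInvariant_evenOdd 0, hrep.isSpinInvariant_evenOdd 1,
    fun _ => hrep.eq_bot_or_eq_evenOdd, fun _ => hrep.eq_bot_or_eq_evenOdd,
    hrep.not_exists_intertwining_equiv, fun _ => hrep.eq_bot_or_eq_even_or_eq_odd_or_eq_top⟩
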